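/- Let μ, ν ∈ P(ℝ²), c(x,y) = h(|x₁−y₁|) + h(|x₂−y₂|) with h convex nonnegative and h(0) = 0, and ζ a pivot measure. Then W_c(μ,ν) = ∫_ℝ ∫_{[0,1]} h(|F⁻¹_{μ_{|x₂}}(s) − F⁻¹_{ζ_{|x₂}}(s)|) ds dμ₂(x₂) + ∫_ℝ ∫_{[0,1]} h(|F⁻¹_{ζ_{|y₁}}(t) − F⁻¹_{ν_{|y₁}}(t)|) dt dν₁(y₁), where F⁻¹ denotes the pseudo-inverse (quantile function) of the cumulative distribution function. -/

import Mathlib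

/-!
A plan on `(X₁ × X₂) × (Y₁ × Y₂)` enters the separable cost only through its cardinal flow, and by
gluing along `Y₁ × X₂` every cardinal flow comes from a plan. Disintegrating an optimal flow that
glues on the pivot `ζ` along `x₂` and along `y₁` decouples the problem: the first component couples
`μ_{|x₂}` with `ζ_{|x₂}`, the second one couples `ζ_{|y₁}` with `ν_{|y₁}`, and the conditional
couplings can be replaced by optimal ones without changing `ζ`, provided these can be chosen
measurably. On the line the quantile couplings are such a choice.

The quantile coupling of `m` and `n` is optimal because it minimizes the mass of every quadrant
`(a, ∞) × (-∞, b]` (Fréchet–Hoeffding). Integrating over quadrants gives minimality for the costs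
`(x - y - r)⁺`, and a convex cost that vanishes on `(-∞, 0]` is a mixture of these over `r`. A
convex cost with minimum `0` at `0` is the sum of such a cost and of the reflection of another one.
-/

open MeasureTheory ProbabilityTheory
open scoped ENNReal ProbabilityTheory

noncomputable section

variable {X₁ X₂ Y₁ Y₂ : Type*} [MeasurableSpace X₁] [MeasurableSpace X₂]
  [MeasurableSpace Y₁] [MeasurableSpace Y₂]

/-- `π` is a transportation plan (coupling) between `μ` and `ν`. -/
def IsCoupling {A B : Type*} [MeasurableSpace A] [MeasurableSpace B]
    (π : Measure (A × B)) (μ : Measure A) (ν : Measure B) : Prop :=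
  π.map Prod.fst = μ ∧ π.map Prod.snd = ν

/-- The minimal transportation (Wasserstein) cost for the cost `c`. -/
noncomputable def Wc {A B : Type*} [MeasurableSpace A] [MeasurableSpace B]
    (c : A → B → ℝ≥0∞) (μ : Measure A) (ν : Measure B) : ℝ≥0∞ :=
  ⨅ π ∈ {π : Measure (A × B) | IsCoupling π μ ν}, ∫⁻ p, c p.1 p.2 ∂π

/-- `(f1, f2)` is a cardinal flow between `μ ∈ P(X₁ × X₂)` and `ν ∈ P(Y₁ × Y₂)`:
the marginal of `f1` on `X = X₁ × X₂` is `μ`, the marginal of `f2` on `Y = Y₁ × Y₂` is `ν`,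
and `f1`, `f2` have the same marginal on `Y₁ × X₂`. -/
def IsCardinalFlow (μ : Measure (X₁ × X₂)) (ν : Measure (Y₁ × Y₂))
    (f1 : Measure ((X₁ × X₂) × Y₁)) (f2 : Measure (X₂ × (Y₁ × Y₂))) : Prop :=
  f1.map Prod.fst = μ ∧ f2.map Prod.snd = ν ∧
    f1.map (fun p => (p.2, p.1.2)) = f2.map (fun p => (p.2.1, p.1))

/-- The set of cardinal flows between `μ` and `ν`. -/
def Flows (μ : Measure (X₁ × X₂)) (ν : Measure (Y₁ × Y₂)) :
    Set (Measure ((X₁ × X₂) × Y₁) × Measure (X₂ × (Y₁ × Y₂))) :=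
  {F | IsProbabilityMeasure F.1 ∧ IsProbabilityMeasure F.2 ∧ IsCardinalFlow μ ν F.1 F.2}

/-- The cardinal flow functional `CT(f¹,f²) = ∫ c₁ df¹ + ∫ c₂ df²`. -/
noncomputable def CT (c₁ : X₁ → Y₁ → ℝ≥0∞) (c₂ : X₂ → Y₂ → ℝ≥0∞)
    (F : Measure ((X₁ × X₂) × Y₁) × Measure (X₂ × (Y₁ × Y₂))) : ℝ≥0∞ :=
  ∫⁻ q, c₁ q.1.1 q.2 ∂F.1 + ∫⁻ q, c₂ q.1 q.2.2 ∂F.2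

/-- `ζ` is a pivot measure between `μ` and `ν` for the separable cost `c₁ + c₂`:
some optimal cardinal flow glues on `ζ`. -/
def IsPivot (μ : Measure (X₁ × X₂)) (ν : Measure (Y₁ × Y₂))
    (c₁ : X₁ → Y₁ → ℝ≥0∞) (c₂ : X₂ → Y₂ → ℝ≥0∞) (ζ : Measure (Y₁ × X₂)) : Prop :=
  ∃ F ∈ Flows μ ν, F.1.map (fun p => (p.2, p.1.2)) = ζ ∧
    CT c₁ c₂ F = ⨅ G ∈ Flows μ ν, CT c₁ c₂ G

/-- Pseudo-inverse (quantile function) of the cumulative distribution function. -/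
noncomputable def qf (m : Measure ℝ) (s : ℝ) : ℝ := sInf {x : ℝ | s ≤ cdf m x}

section Couplings

variable {A B Z : Type*} [MeasurableSpace A] [MeasurableSpace B] [MeasurableSpace Z]
  {c : A → B → ℝ≥0∞} {μ : Measure A} {ν : Measure B} {π : Measure (A × B)}

/-- `π` is an optimal transportation plan between `μ` and `ν` for the cost `c`. -/
def IsOptimalPlan (c : A → B → ℝ≥0∞) (π : Measure (A × B)) (μ : Measure A) (ν : Measure B) :
    Prop :=
  IsCoupling π μ ν ∧ ∫⁻ p, c p.1 p.2 ∂π = Wc c μ ν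

lemma IsCoupling.swap (hπ : IsCoupling π μ ν) : IsCoupling (π.map Prod.swap) ν μ := by
  constructor
  · rw [Measure.map_map measurable_fst measurable_swap]
    exact hπ.2
  · rw [Measure.map_map measurable_snd measurable_swap]
    exact hπ.1

lemma IsCoupling.isProbabilityMeasure [IsProbabilityMeasure μ] (hπ : IsCoupling π μ ν) :
    IsProbabilityMeasure π := by
  have : IsProbabilityMeasure (π.map Prod.fst) := hπ.1 ▸ inferInstance
  exact Measure.isProbabilityMeasure_of_map Prod.fst

lemma IsCoupling.Wc_le (hπ : IsCoupling π μ ν) : Wc c μ ν ≤ ∫⁻ p, c p.1 p.2 ∂π :=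
  iInf₂_le π hπ

lemma IsCoupling.isOptimalPlan (hπ : IsCoupling π μ ν)
    (hmin : ∀ γ, IsCoupling γ μ ν → ∫⁻ p, c p.1 p.2 ∂π ≤ ∫⁻ p, c p.1 p.2 ∂γ) :
    IsOptimalPlan c π μ ν :=
  ⟨hπ, (le_iInf₂ hmin).antisymm hπ.Wc_le⟩

variable {α : Measure Z} [SFinite α] {κ : Kernel Z A} {κ' : Kernel Z B} {η : Kernel Z (A × B)}
  [IsMarkovKernel η]

lemma map_compProd_fst_eq (hη : ∀ z, IsCoupling (η z) (κ z) (κ' z)) :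
    (α ⊗ₘ η).map (fun p => (p.1, p.2.1)) = α ⊗ₘ κ := by
  have hκ : η.map Prod.fst = κ :=
    Kernel.ext fun z => (Kernel.map_apply _ measurable_fst z).trans (hη z).1
  rw [← hκ, Measure.compProd_map measurable_fst]
  rfl

lemma map_compProd_snd_eq (hη : ∀ z, IsCoupling (η z) (κ z) (κ' z)) :
    (α ⊗ₘ η).map (fun p => (p.1, p.2.2)) = α ⊗ₘ κ' := by
  have hκ' : η.map Prod.snd = κ' :=
    Kernel.ext fun z => (Kernel.map_apply _ measurable_snd z).trans (hη z).2
  rw [← hκ', Measure.compProd_map measurable_snd]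
  rfl

lemma lintegral_compProd_eq_lintegral_Wc (hc : Measurable (Function.uncurry c))
    (hη : ∀ z, IsOptimalPlan c (η z) (κ z) (κ' z)) :
    ∫⁻ p, c p.2.1 p.2.2 ∂(α ⊗ₘ η) = ∫⁻ z, Wc c (κ z) (κ' z) ∂α := by
  rw [Measure.lintegral_compProd (f := fun p : Z × (A × B) => c p.2.1 p.2.2)
    (hc.comp measurable_snd)]
  exact lintegral_congr fun z => (hη z).2

end Couplings

section Disintegration

variable {A B Z : Type*} [MeasurableSpace A] [MeasurableSpace B] [MeasurableSpace Z]
  [StandardBorelSpace A] [Nonempty A] [StandardBorelSpace B] [Nonempty B]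

lemma exists_map_eq_of_fst_eq (P : Measure (Z × A)) (Q : Measure (Z × B)) [IsFiniteMeasure P]
    [IsFiniteMeasure Q] (hPQ : P.fst = Q.fst) :
    ∃ R : Measure (Z × (A × B)),
      R.map (fun p => (p.1, p.2.1)) = P ∧ R.map (fun p => (p.1, p.2.2)) = Q := by
  have hcoupling : ∀ z, IsCoupling ((P.condKernel ×ₖ Q.condKernel) z)
      (P.condKernel z) (Q.condKernel z) := fun z => by
    rw [Kernel.prod_apply]
    exact ⟨Measure.fst_prod, Measure.snd_prod⟩
  refine ⟨P.fst ⊗ₘ (P.condKernel ×ₖ Q.condKernel), ?_, ?_⟩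
  · rw [map_compProd_fst_eq hcoupling, P.disintegrate]
  · rw [map_compProd_snd_eq hcoupling, hPQ, Q.disintegrate]

lemma lintegral_Wc_le (c : A → B → ℝ≥0∞) (hc : Measurable (Function.uncurry c))
    {θ : Measure (Z × (A × B))} [IsFiniteMeasure θ] {α : Measure Z} [IsFiniteMeasure α]
    {κ : Kernel Z A} [IsMarkovKernel κ] {κ' : Kernel Z B} [IsMarkovKernel κ']
    (h1 : θ.map (fun p => (p.1, p.2.1)) = α ⊗ₘ κ)
    (h2 : θ.map (fun p => (p.1, p.2.2)) = α ⊗ₘ κ') :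
    ∫⁻ z, Wc c (κ z) (κ' z) ∂α ≤ ∫⁻ p, c p.2.1 p.2.2 ∂θ := by
  have hfst : θ.fst = α := by
    rw [← Measure.fst_compProd α κ, ← h1, Measure.fst, Measure.fst,
      Measure.map_map measurable_fst (by fun_prop)]
    rfl
  have hθ : α ⊗ₘ θ.condKernel = θ := hfst ▸ θ.disintegrate θ.condKernel
  have hκ : θ.condKernel.map Prod.fst =ᵐ[α] κ := Kernel.ae_eq_of_compProd_eq <| by
    rw [Measure.compProd_map measurable_fst, hθ, ← h1]
    rfl
  have hκ' : θ.condKernel.map Prod.snd =ᵐ[α] κ' := Kernel.ae_eq_of_compProd_eq <| by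
    rw [Measure.compProd_map measurable_snd, hθ, ← h2]
    rfl
  rw [← hθ, Measure.lintegral_compProd (f := fun p : Z × (A × B) => c p.2.1 p.2.2)
    (hc.comp measurable_snd)]
  refine lintegral_mono_ae ?_
  filter_upwards [hκ, hκ'] with z hz hz'
  refine IsCoupling.Wc_le ⟨?_, ?_⟩
  · rw [← hz, Kernel.map_apply _ measurable_fst]
  · rw [← hz', Kernel.map_apply _ measurable_snd]

end Disintegration

section CardinalFlows

/-- The cardinal flow induced by a plan `π` on `(X₁ × X₂) × (Y₁ × Y₂)`: the laws of
`((x₁, x₂), y₁)` and of `(x₂, (y₁, y₂))` under `π`. -/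
def flowOf (π : Measure ((X₁ × X₂) × (Y₁ × Y₂))) :
    Measure ((X₁ × X₂) × Y₁) × Measure (X₂ × (Y₁ × Y₂)) :=
  (π.map (fun p => (p.1, p.2.1)), π.map (fun p => (p.1.2, p.2)))

variable {μ : Measure (X₁ × X₂)} {ν : Measure (Y₁ × Y₂)} {c₁ : X₁ → Y₁ → ℝ≥0∞}
  {c₂ : X₂ → Y₂ → ℝ≥0∞}

lemma flowOf_mem_Flows_iff [IsProbabilityMeasure μ] {π : Measure ((X₁ × X₂) × (Y₁ × Y₂))} :
    flowOf π ∈ Flows μ ν ↔ IsCoupling π μ ν := by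
  have hfst : (flowOf π).1.map Prod.fst = π.map Prod.fst :=
    Measure.map_map measurable_fst (by fun_prop)
  have hsnd : (flowOf π).2.map Prod.snd = π.map Prod.snd :=
    Measure.map_map measurable_snd (by fun_prop)
  refine ⟨fun ⟨_, _, hμ, hν, _⟩ => ⟨hfst ▸ hμ, hsnd ▸ hν⟩, fun hπ => ?_⟩
  have := hπ.isProbabilityMeasure
  refine ⟨Measure.isProbabilityMeasure_map (by fun_prop),
    Measure.isProbabilityMeasure_map (by fun_prop), hfst.trans hπ.1, hsnd.trans hπ.2, ?_⟩
  rw [flowOf, Measure.map_map (by fun_prop) (by fun_prop),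
    Measure.map_map (by fun_prop) (by fun_prop)]
  rfl

lemma CT_flowOf (hc₁ : Measurable (Function.uncurry c₁)) (hc₂ : Measurable (Function.uncurry c₂))
    (π : Measure ((X₁ × X₂) × (Y₁ × Y₂))) :
    CT c₁ c₂ (flowOf π) = ∫⁻ p, (c₁ p.1.1 p.2.1 + c₂ p.1.2 p.2.2) ∂π := by
  have hm₁ : Measurable fun q : (X₁ × X₂) × Y₁ => c₁ q.1.1 q.2 :=
    hc₁.comp (measurable_fst.fst.prodMk measurable_snd)
  have hm₂ : Measurable fun q : X₂ × (Y₁ × Y₂) => c₂ q.1 q.2.2 :=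
    hc₂.comp (measurable_fst.prodMk measurable_snd.snd)
  rw [CT, flowOf, lintegral_map hm₁ (by fun_prop), lintegral_map hm₂ (by fun_prop)]
  exact (lintegral_add_left (hm₁.comp (measurable_fst.prodMk measurable_snd.fst)) _).symm

lemma exists_flowOf_eq [StandardBorelSpace X₁] [Nonempty X₁] [StandardBorelSpace Y₂] [Nonempty Y₂]
    (f1 : Measure ((X₁ × X₂) × Y₁)) (f2 : Measure (X₂ × (Y₁ × Y₂))) [IsFiniteMeasure f1]
    [IsFiniteMeasure f2]
    (hglue : f1.map (fun p => (p.2, p.1.2)) = f2.map (fun p => (p.2.1, p.1))) :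
    ∃ π, flowOf π = (f1, f2) := by
  obtain ⟨R, hR₁, hR₂⟩ := exists_map_eq_of_fst_eq
    (f1.map fun p => ((p.2, p.1.2), p.1.1)) (f2.map fun p => ((p.2.1, p.1), p.2.2)) (by
      rw [Measure.fst, Measure.fst, Measure.map_map (by fun_prop) (by fun_prop),
        Measure.map_map (by fun_prop) (by fun_prop)]
      exact hglue)
  refine ⟨R.map fun r => ((r.2.1, r.1.2), (r.1.1, r.2.2)), Prod.ext ?_ ?_⟩
  · calc (R.map fun r => ((r.2.1, r.1.2), (r.1.1, r.2.2))).map (fun p => (p.1, p.2.1))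
        = (R.map fun r => (r.1, r.2.1)).map (fun q => ((q.2, q.1.2), q.1.1)) := by
          rw [Measure.map_map (by fun_prop) (by fun_prop),
            Measure.map_map (by fun_prop) (by fun_prop)]
          rfl
      _ = f1 := by
          rw [hR₁, Measure.map_map (by fun_prop) (by fun_prop)]
          exact Measure.map_id
  · calc (R.map fun r => ((r.2.1, r.1.2), (r.1.1, r.2.2))).map (fun p => (p.1.2, p.2))
        = (R.map fun r => (r.1, r.2.2)).map (fun q => (q.1.2, (q.1.1, q.2))) := by
          rw [Measure.map_map (by fun_prop) (by fun_prop),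
            Measure.map_map (by fun_prop) (by fun_prop)]
          rfl
      _ = f2 := by
          rw [hR₂, Measure.map_map (by fun_prop) (by fun_prop)]
          exact Measure.map_id

theorem Wc_eq_iInf_CT [StandardBorelSpace X₁] [Nonempty X₁] [StandardBorelSpace Y₂] [Nonempty Y₂]
    [IsProbabilityMeasure μ] (hc₁ : Measurable (Function.uncurry c₁))
    (hc₂ : Measurable (Function.uncurry c₂)) :
    Wc (fun x y => c₁ x.1 y.1 + c₂ x.2 y.2) μ ν = ⨅ F ∈ Flows μ ν, CT c₁ c₂ F := by
  refine le_antisymm (le_iInf₂ fun F hF => ?_) (le_iInf₂ fun π hπ => ?_)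
  · have := hF.1
    have := hF.2.1
    obtain ⟨π, hπ⟩ := exists_flowOf_eq F.1 F.2 hF.2.2.2.2
    obtain rfl : flowOf π = F := hπ
    rw [CT_flowOf hc₁ hc₂]
    exact (flowOf_mem_Flows_iff.1 hF).Wc_le
  · rw [← CT_flowOf hc₁ hc₂]
    exact iInf₂_le _ (flowOf_mem_Flows_iff.2 hπ)

variable {ζ : Measure (Y₁ × X₂)} {κμ : Kernel X₂ X₁} {κζ₂ : Kernel X₂ Y₁} {κζ₁ : Kernel Y₁ X₂}
  {κν : Kernel Y₁ Y₂}

lemma lintegral_Wc_add_lintegral_Wc_le_CT [StandardBorelSpace X₁] [Nonempty X₁]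
    [StandardBorelSpace X₂] [Nonempty X₂] [StandardBorelSpace Y₁] [Nonempty Y₁]
    [StandardBorelSpace Y₂] [Nonempty Y₂] [IsFiniteMeasure μ] [IsFiniteMeasure ν]
    [IsMarkovKernel κμ] [IsMarkovKernel κζ₂] [IsMarkovKernel κζ₁] [IsMarkovKernel κν]
    (hc₁ : Measurable (Function.uncurry c₁)) (hc₂ : Measurable (Function.uncurry c₂))
    (hκμ : μ = (μ.snd ⊗ₘ κμ).map Prod.swap) (hκζ₂ : ζ = (μ.snd ⊗ₘ κζ₂).map Prod.swap)
    (hκζ₁ : ζ = ν.fst ⊗ₘ κζ₁) (hκν : ν = ν.fst ⊗ₘ κν)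
    {F : Measure ((X₁ × X₂) × Y₁) × Measure (X₂ × (Y₁ × Y₂))} (hF : F ∈ Flows μ ν)
    (hFζ : F.1.map (fun p => (p.2, p.1.2)) = ζ) :
    ∫⁻ x₂, Wc c₁ (κμ x₂) (κζ₂ x₂) ∂μ.snd + ∫⁻ y₁, Wc c₂ (κζ₁ y₁) (κν y₁) ∂ν.fst
      ≤ CT c₁ c₂ F := by
  obtain ⟨hF₁, hF₂, hFμ, hFν, hglue⟩ := hF
  have hμ : μ.map Prod.swap = μ.snd ⊗ₘ κμ :=
    MeasurableEquiv.prodComm.map_apply_eq_iff_map_symm_apply_eq.2 hκμ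
  have hζ : ζ.map Prod.swap = μ.snd ⊗ₘ κζ₂ :=
    MeasurableEquiv.prodComm.map_apply_eq_iff_map_symm_apply_eq.2 hκζ₂
  refine add_le_add ?_ ?_
  · refine (lintegral_Wc_le c₁ hc₁ (θ := F.1.map fun p => (p.1.2, (p.1.1, p.2))) ?_ ?_).trans_eq
      (lintegral_map (hc₁.comp measurable_snd) (by fun_prop))
    · rw [← hμ, ← hFμ, Measure.map_map (by fun_prop) (by fun_prop),
        Measure.map_map (by fun_prop) (by fun_prop)]
      rfl
    · rw [← hζ, ← hFζ, Measure.map_map (by fun_prop) (by fun_prop),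
        Measure.map_map (by fun_prop) (by fun_prop)]
      rfl
  · refine (lintegral_Wc_le c₂ hc₂ (θ := F.2.map fun p => (p.2.1, (p.1, p.2.2))) ?_ ?_).trans_eq
      (lintegral_map (hc₂.comp measurable_snd) (by fun_prop))
    · rw [← hκζ₁, ← hFζ, hglue, Measure.map_map (by fun_prop) (by fun_prop)]
      rfl
    · rw [← hκν, ← hFν, Measure.map_map (by fun_prop) (by fun_prop)]
      rfl

lemma exists_mem_Flows_CT_eq [IsProbabilityMeasure μ] [IsProbabilityMeasure ν]
    (hc₁ : Measurable (Function.uncurry c₁)) (hc₂ : Measurable (Function.uncurry c₂))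
    (hκμ : μ = (μ.snd ⊗ₘ κμ).map Prod.swap) (hκζ₂ : ζ = (μ.snd ⊗ₘ κζ₂).map Prod.swap)
    (hκζ₁ : ζ = ν.fst ⊗ₘ κζ₁) (hκν : ν = ν.fst ⊗ₘ κν)
    {η₁ : Kernel X₂ (X₁ × Y₁)} [IsMarkovKernel η₁] {η₂ : Kernel Y₁ (X₂ × Y₂)} [IsMarkovKernel η₂]
    (hη₁ : ∀ x₂, IsOptimalPlan c₁ (η₁ x₂) (κμ x₂) (κζ₂ x₂))
    (hη₂ : ∀ y₁, IsOptimalPlan c₂ (η₂ y₁) (κζ₁ y₁) (κν y₁)) :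
    ∃ F ∈ Flows μ ν, CT c₁ c₂ F =
      ∫⁻ x₂, Wc c₁ (κμ x₂) (κζ₂ x₂) ∂μ.snd + ∫⁻ y₁, Wc c₂ (κζ₁ y₁) (κν y₁) ∂ν.fst := by
  have hm₁ : Measurable fun q : (X₁ × X₂) × Y₁ => c₁ q.1.1 q.2 :=
    hc₁.comp (measurable_fst.fst.prodMk measurable_snd)
  have hm₂ : Measurable fun q : X₂ × (Y₁ × Y₂) => c₂ q.1 q.2.2 :=
    hc₂.comp (measurable_fst.prodMk measurable_snd.snd)
  refine ⟨((μ.snd ⊗ₘ η₁).map fun p => ((p.2.1, p.1), p.2.2),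
    (ν.fst ⊗ₘ η₂).map fun p => (p.2.1, (p.1, p.2.2))), ⟨?_, ?_, ?_, ?_, ?_⟩, ?_⟩
  · exact Measure.isProbabilityMeasure_map (by fun_prop)
  · exact Measure.isProbabilityMeasure_map (by fun_prop)
  · conv_rhs => rw [hκμ, ← map_compProd_fst_eq fun x₂ => (hη₁ x₂).1,
      Measure.map_map measurable_swap (by fun_prop)]
    exact Measure.map_map (by fun_prop) (by fun_prop)
  · conv_rhs => rw [hκν, ← map_compProd_snd_eq fun y₁ => (hη₂ y₁).1]
    exact Measure.map_map (by fun_prop) (by fun_prop)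
  · trans ζ
    · rw [hκζ₂, ← map_compProd_snd_eq fun x₂ => (hη₁ x₂).1,
        Measure.map_map measurable_swap (by fun_prop)]
      exact Measure.map_map (by fun_prop) (by fun_prop)
    · rw [hκζ₁, ← map_compProd_fst_eq fun y₁ => (hη₂ y₁).1]
      symm
      exact Measure.map_map (by fun_prop) (by fun_prop)
  · rw [CT, lintegral_map hm₁ (by fun_prop), lintegral_map hm₂ (by fun_prop),
      ← lintegral_compProd_eq_lintegral_Wc hc₁ hη₁, ← lintegral_compProd_eq_lintegral_Wc hc₂ hη₂]

theorem Wc_eq_lintegral_Wc_add_lintegral_Wc_of_isPivot [StandardBorelSpace X₁]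
    [StandardBorelSpace X₂] [StandardBorelSpace Y₁] [StandardBorelSpace Y₂]
    [IsProbabilityMeasure μ] [IsProbabilityMeasure ν]
    [IsMarkovKernel κμ] [IsMarkovKernel κζ₂] [IsMarkovKernel κζ₁] [IsMarkovKernel κν]
    (hc₁ : Measurable (Function.uncurry c₁)) (hc₂ : Measurable (Function.uncurry c₂))
    (hζ : IsPivot μ ν c₁ c₂ ζ)
    (hκμ : μ = (μ.snd ⊗ₘ κμ).map Prod.swap) (hκζ₂ : ζ = (μ.snd ⊗ₘ κζ₂).map Prod.swap)
    (hκζ₁ : ζ = ν.fst ⊗ₘ κζ₁) (hκν : ν = ν.fst ⊗ₘ κν)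
    {η₁ : Kernel X₂ (X₁ × Y₁)} [IsMarkovKernel η₁] {η₂ : Kernel Y₁ (X₂ × Y₂)} [IsMarkovKernel η₂]
    (hη₁ : ∀ x₂, IsOptimalPlan c₁ (η₁ x₂) (κμ x₂) (κζ₂ x₂))
    (hη₂ : ∀ y₁, IsOptimalPlan c₂ (η₂ y₁) (κζ₁ y₁) (κν y₁)) :
    Wc (fun x y => c₁ x.1 y.1 + c₂ x.2 y.2) μ ν =
      ∫⁻ x₂, Wc c₁ (κμ x₂) (κζ₂ x₂) ∂μ.snd + ∫⁻ y₁, Wc c₂ (κζ₁ y₁) (κν y₁) ∂ν.fst := by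
  obtain ⟨hX₁, hX₂⟩ := nonempty_prod.1 μ.nonempty_of_neZero
  obtain ⟨hY₁, hY₂⟩ := nonempty_prod.1 ν.nonempty_of_neZero
  rw [Wc_eq_iInf_CT hc₁ hc₂]
  refine le_antisymm ?_ ?_
  · obtain ⟨F, hF, hFcost⟩ := exists_mem_Flows_CT_eq hc₁ hc₂ hκμ hκζ₂ hκζ₁ hκν hη₁ hη₂
    exact hFcost ▸ iInf₂_le F hF
  · obtain ⟨F, hF, hFζ, hFmin⟩ := hζ
    exact hFmin ▸ lintegral_Wc_add_lintegral_Wc_le_CT hc₁ hc₂ hκμ hκζ₂ hκζ₁ hκν hF hFζ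

end CardinalFlows

section Quantile

variable {A : Type*} [MeasurableSpace A] {m n : Measure ℝ} {s x : ℝ}

lemma qf_le_iff (hs : 0 < s) (hne : {y | s ≤ cdf m y}.Nonempty) :
    qf m s ≤ x ↔ s ≤ cdf m x := by
  refine ⟨fun hq => ?_, fun hx => csInf_le ?_ hx⟩
  · have hright : Filter.Tendsto (cdf m) (nhdsWithin x (Set.Ioi x)) (nhds (cdf m x)) :=
      ((cdf m).right_continuous x).tendsto.mono_left (nhdsWithin_mono _ Set.Ioi_subset_Ici_self)
    refine ge_of_tendsto hright ?_
    filter_upwards [self_mem_nhdsWithin] with y hy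
    obtain ⟨z, hz, hzy⟩ := exists_lt_of_csInf_lt hne (hq.trans_lt hy)
    exact hz.trans (monotone_cdf m hzy.le)
  · obtain ⟨b, hb⟩ := ((tendsto_cdf_atBot m).eventually_lt_const hs).exists
    exact ⟨b, fun y hy => (monotone_cdf m).reflect_lt (hb.trans_le hy) |>.le⟩

lemma qf_le_iff_of_mem_Ioo (hs : s ∈ Set.Ioo 0 1) : qf m s ≤ x ↔ s ≤ cdf m x :=
  qf_le_iff hs.1 (((tendsto_cdf_atTop m).eventually_const_lt hs.2).exists.imp fun _ => le_of_lt)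

lemma qf_eq_zero_of_nonpos (hs : s ≤ 0) : qf m s = 0 := by
  rw [qf, Set.eq_univ_of_forall (s := {y | s ≤ cdf m y}) fun y => hs.trans (cdf_nonneg m y),
    Real.sInf_univ]

-- The second alternative is about junk values: the set defining `qf` is `univ` for `s ≤ 0` and may
-- be empty for `1 ≤ s`, and its infimum is then `0`.
lemma qf_le_iff_or : qf m s ≤ x ↔
    0 < s ∧ s ≤ cdf m x ∨ 0 ≤ x ∧ (s ≤ 0 ∨ ∀ k : ℕ, cdf m k < s) := by
  rcases le_or_gt s 0 with hs | hs
  · simp [qf_eq_zero_of_nonpos hs, hs, hs.not_gt]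
  by_cases hne : {y | s ≤ cdf m y}.Nonempty
  · obtain ⟨y, hy⟩ := hne
    obtain ⟨k, hk⟩ := exists_nat_ge y
    have hnat : ¬ ∀ k : ℕ, cdf m k < s := fun hlt =>
      (hlt k).not_ge (le_trans hy (monotone_cdf m hk))
    simp only [qf_le_iff hs ⟨y, hy⟩, hs, hs.not_ge, hnat, true_and, or_self, and_false, or_false]
  · have hlt : ∀ y, cdf m y < s := fun y => not_le.1 fun hy => hne ⟨y, hy⟩
    rw [qf, Set.not_nonempty_iff_eq_empty.1 hne, Real.sInf_empty]
    simp [hlt, (hlt x).not_ge]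

lemma measurable_qf_kernel (κ : Kernel A ℝ) [IsMarkovKernel κ] :
    Measurable fun p : A × ℝ => qf (κ p.1) p.2 := by
  have hcdf (x : ℝ) : Measurable fun p : A × ℝ => cdf (κ p.1) x := by
    simp_rw [cdf_eq_real]
    exact ((κ.measurable_coe measurableSet_Iic).comp measurable_fst).ennreal_toReal
  refine measurable_of_Iic fun x => ?_
  simp only [Set.preimage, Set.mem_Iic, qf_le_iff_or]
  exact ((measurableSet_lt measurable_const measurable_snd).inter
    (measurableSet_le measurable_snd (hcdf x))).union ((MeasurableSet.const _).inter
      ((measurableSet_le measurable_snd measurable_const).union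
        (measurableSet_setOfPred.2 <| Measurable.forall fun k =>
          measurableSet_setOfPred.1 <| measurableSet_lt (hcdf k) measurable_snd)))

lemma measurable_qf [IsProbabilityMeasure m] : Measurable (qf m) :=
  (measurable_qf_kernel (Kernel.const Unit m)).comp (measurable_prodMk_left (x := ()))

/-- The uniform law on `(0, 1)`. The endpoints are left out because the quantile functions take the
junk value `0` there when the support is unbounded. -/
def unitUniform : Measure ℝ := volume.restrict (Set.Ioo 0 1)

instance : IsProbabilityMeasure unitUniform := ⟨by simp [unitUniform]⟩

lemma ae_unitUniform_mem_Ioo : ∀ᵐ s ∂unitUniform, s ∈ Set.Ioo 0 1 :=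
  ae_restrict_mem measurableSet_Ioo

lemma unitUniform_Ioc {a b : ℝ} (ha : 0 ≤ a) (hb : b ≤ 1) :
    unitUniform (Set.Ioc a b) = ENNReal.ofReal (b - a) := by
  rw [unitUniform, Measure.restrict_congr_set Ioo_ae_eq_Ioc,
    Measure.restrict_eq_self _ (Set.Ioc_subset_Ioc ha hb), Real.volume_Ioc]

lemma map_qf_unitUniform [IsProbabilityMeasure m] : unitUniform.map (qf m) = m := by
  have := Measure.isProbabilityMeasure_map (μ := unitUniform) (measurable_qf (m := m)).aemeasurable
  refine Measure.ext_of_Iic _ _ fun x => ?_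
  have hpreimage : qf m ⁻¹' Set.Iic x =ᵐ[unitUniform] Set.Ioc 0 (cdf m x) := by
    filter_upwards [ae_unitUniform_mem_Ioo] with s hs
    exact propext ((qf_le_iff_of_mem_Ioo hs).trans (and_iff_right hs.1).symm)
  rw [Measure.map_apply measurable_qf measurableSet_Iic, measure_congr hpreimage,
    unitUniform_Ioc le_rfl (cdf_le_one m x), sub_zero, ofReal_cdf]

/-- The quantile (monotone) coupling of `m` and `n`: both quantile functions are evaluated at the
same uniform variable. -/
def quantileCoupling (m n : Measure ℝ) : Measure (ℝ × ℝ) :=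
  unitUniform.map fun s => (qf m s, qf n s)

/-- The quantile couplings of `κ a` and `κ' a`, as a kernel in `a`. -/
def quantileKernel (κ κ' : Kernel A ℝ) : Kernel A (ℝ × ℝ) :=
  (Kernel.id ×ₖ Kernel.const A unitUniform).map fun p => (qf (κ p.1) p.2, qf (κ' p.1) p.2)

section Kernel

variable (κ κ' : Kernel A ℝ) [IsMarkovKernel κ] [IsMarkovKernel κ']

lemma measurable_qf_prodMk :
    Measurable fun p : A × ℝ => (qf (κ p.1) p.2, qf (κ' p.1) p.2) :=
  (measurable_qf_kernel κ).prodMk (measurable_qf_kernel κ')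

instance : IsMarkovKernel (quantileKernel κ κ') :=
  Kernel.IsMarkovKernel.map _ (measurable_qf_prodMk κ κ')

lemma quantileKernel_apply (a : A) : quantileKernel κ κ' a = quantileCoupling (κ a) (κ' a) := by
  rw [quantileKernel, Kernel.map_apply _ (measurable_qf_prodMk κ κ'), Kernel.prod_apply,
    Kernel.id_apply, Kernel.const_apply, Measure.dirac_prod,
    Measure.map_map (measurable_qf_prodMk κ κ') measurable_prodMk_left]
  rfl

end Kernel

variable [IsProbabilityMeasure m] [IsProbabilityMeasure n]

lemma isCoupling_quantileCoupling : IsCoupling (quantileCoupling m n) m n := by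
  have hqf : Measurable fun s => (qf m s, qf n s) := measurable_qf.prodMk measurable_qf
  exact ⟨(Measure.map_map measurable_fst hqf).trans map_qf_unitUniform,
    (Measure.map_map measurable_snd hqf).trans map_qf_unitUniform⟩

lemma quantileCoupling_swap :
    (quantileCoupling m n).map Prod.swap = quantileCoupling n m :=
  Measure.map_map measurable_swap (measurable_qf.prodMk measurable_qf)

lemma lintegral_quantileCoupling {f : ℝ × ℝ → ℝ≥0∞} (hf : Measurable f) :
    ∫⁻ p, f p ∂quantileCoupling m n = ∫⁻ s in Set.Icc 0 1, f (qf m s, qf n s) := by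
  rw [quantileCoupling, lintegral_map hf (measurable_qf.prodMk measurable_qf), unitUniform,
    Measure.restrict_congr_set Ioo_ae_eq_Icc]

lemma quantileCoupling_Ioi_prod_Iic_le {γ : Measure (ℝ × ℝ)} (hγ : IsCoupling γ m n) (a b : ℝ) :
    quantileCoupling m n (Set.Ioi a ×ˢ Set.Iic b) ≤ γ (Set.Ioi a ×ˢ Set.Iic b) := by
  have hpreimage : (fun s => (qf m s, qf n s)) ⁻¹' (Set.Ioi a ×ˢ Set.Iic b)
      =ᵐ[unitUniform] Set.Ioc (cdf m a) (cdf n b) := by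
    filter_upwards [ae_unitUniform_mem_Ioo] with s hs
    refine propext (and_congr ?_ (qf_le_iff_of_mem_Ioo hs))
    exact not_le.symm.trans ((not_congr (qf_le_iff_of_mem_Ioo hs)).trans not_le)
  calc quantileCoupling m n (Set.Ioi a ×ˢ Set.Iic b)
      = n (Set.Iic b) - m (Set.Iic a) := by
        rw [quantileCoupling, Measure.map_apply (measurable_qf.prodMk measurable_qf)
          (measurableSet_Ioi.prod measurableSet_Iic), measure_congr hpreimage,
          unitUniform_Ioc (cdf_nonneg m a) (cdf_le_one n b),
          ENNReal.ofReal_sub _ (cdf_nonneg m a), ofReal_cdf, ofReal_cdf]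
    _ = γ (Prod.snd ⁻¹' Set.Iic b) - γ (Prod.fst ⁻¹' Set.Iic a) := by
        rw [← Measure.map_apply measurable_snd measurableSet_Iic, hγ.2,
          ← Measure.map_apply measurable_fst measurableSet_Iic, hγ.1]
    _ ≤ γ (Prod.snd ⁻¹' Set.Iic b \ Prod.fst ⁻¹' Set.Iic a) := le_measure_sdiff
    _ = γ (Set.Ioi a ×ˢ Set.Iic b) := by
        congr 1
        ext p
        simp [and_comm]

end Quantile

section ConvexCost

lemma lintegral_ofReal_sub_eq_lintegral_measure {Ω : Type*} [MeasurableSpace Ω] (P : Measure Ω)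
    [SFinite P] {f g : Ω → ℝ} (hf : Measurable f) (hg : Measurable g) :
    ∫⁻ ω, ENNReal.ofReal (f ω - g ω) ∂P = ∫⁻ u, P {ω | g ω ≤ u ∧ u < f ω} := by
  have hmeas : MeasurableSet {q : Ω × ℝ | g q.1 ≤ q.2 ∧ q.2 < f q.1} :=
    (measurableSet_le (hg.comp measurable_fst) measurable_snd).inter
      (measurableSet_lt measurable_snd (hf.comp measurable_fst))
  calc ∫⁻ ω, ENNReal.ofReal (f ω - g ω) ∂P
      = ∫⁻ ω, volume (Set.Ico (g ω) (f ω)) ∂P := by simp only [Real.volume_Ico]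
    _ = (P.prod volume) {q : Ω × ℝ | g q.1 ≤ q.2 ∧ q.2 < f q.1} := (Measure.prod_apply hmeas).symm
    _ = ∫⁻ u, P {ω | g ω ≤ u ∧ u < f ω} := Measure.prod_apply_symm hmeas

variable {φ : ℝ → ℝ}

lemma hasDerivWithinAt_rightDeriv_of_convexOn_univ (hφ : ConvexOn ℝ Set.univ φ) (t : ℝ) :
    HasDerivWithinAt φ (derivWithin φ (Set.Ioi t) t) (Set.Ioi t) t :=
  hφ.hasDerivWithinAt_rightDeriv_of_mem_interior (by simp)

lemma monotone_rightDeriv_of_convexOn_univ (hφ : ConvexOn ℝ Set.univ φ) :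
    Monotone fun t => derivWithin φ (Set.Ioi t) t := by
  simpa only [interior_univ, monotoneOn_univ] using hφ.monotoneOn_rightDeriv

lemma continuous_of_convexOn_univ (hφ : ConvexOn ℝ Set.univ φ) : Continuous φ :=
  continuousOn_univ.1 (hφ.continuousOn isOpen_univ)

lemma integral_rightDeriv_of_convexOn_univ (hφ : ConvexOn ℝ Set.univ φ) {a b : ℝ} (hab : a ≤ b) :
    ∫ t in a..b, derivWithin φ (Set.Ioi t) t = φ b - φ a :=
  intervalIntegral.integral_eq_sub_of_hasDeriv_right_of_le hab
    (continuous_of_convexOn_univ hφ).continuousOn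
    (fun t _ => hasDerivWithinAt_rightDeriv_of_convexOn_univ hφ t)
    (monotone_rightDeriv_of_convexOn_univ hφ).intervalIntegrable

lemma rightDeriv_eq_zero_of_neg (h0 : ∀ t ≤ 0, φ t = 0) {t : ℝ} (ht : t < 0) :
    derivWithin φ (Set.Ioi t) t = 0 := by
  have heq : φ =ᶠ[nhds t] fun _ => 0 := by
    filter_upwards [Iio_mem_nhds ht] with r hr using h0 r (le_of_lt hr)
  rw [heq.derivWithin_eq_of_nhds, derivWithin_fun_const, Pi.zero_apply]

lemma rightDeriv_nonneg_of_convexOn_univ (hφ : ConvexOn ℝ Set.univ φ) (h0 : ∀ t ≤ 0, φ t = 0)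
    (t : ℝ) : 0 ≤ derivWithin φ (Set.Ioi t) t := by
  have hlt : min t 0 - 1 < 0 := by linarith [min_le_right t 0]
  rw [← rightDeriv_eq_zero_of_neg h0 hlt]
  exact monotone_rightDeriv_of_convexOn_univ hφ (by linarith [min_le_left t 0])

lemma lintegral_Iio_rightDeriv_of_convexOn_univ (hφ : ConvexOn ℝ Set.univ φ)
    (h0 : ∀ t ≤ 0, φ t = 0) (z : ℝ) :
    ∫⁻ t in Set.Iio z, ENNReal.ofReal (derivWithin φ (Set.Ioi t) t) = ENNReal.ofReal (φ z) := by
  obtain ⟨a, ha0, haz⟩ : ∃ a : ℝ, a < 0 ∧ a < z := 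
    ⟨min 0 z - 1, by linarith [min_le_left 0 z], by linarith [min_le_right 0 z]⟩
  have hint : IntegrableOn (fun t => derivWithin φ (Set.Ioi t) t) (Set.Ioc a z) :=
    (intervalIntegrable_iff_integrableOn_Ioc_of_le haz.le).1
      (monotone_rightDeriv_of_convexOn_univ hφ).intervalIntegrable
  calc ∫⁻ t in Set.Iio z, ENNReal.ofReal (derivWithin φ (Set.Ioi t) t)
      = ∫⁻ t in Set.Ioo a z, ENNReal.ofReal (derivWithin φ (Set.Ioi t) t) := by
        rw [← Set.Ioi_inter_Iio, ← setLIntegral_indicator measurableSet_Ioi]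
        refine lintegral_congr fun t => Eq.symm ?_
        refine Set.indicator_apply_eq_self.2 fun hta => ?_
        rw [rightDeriv_eq_zero_of_neg h0 ((not_lt.1 hta).trans_lt ha0), ENNReal.ofReal_zero]
    _ = ∫⁻ t in Set.Ioc a z, ENNReal.ofReal (derivWithin φ (Set.Ioi t) t) :=
        setLIntegral_congr Ioo_ae_eq_Ioc
    _ = ENNReal.ofReal (∫ t in a..z, derivWithin φ (Set.Ioi t) t) := by
        rw [intervalIntegral.integral_of_le haz.le, ofReal_integral_eq_lintegral_ofReal hint
          (ae_of_all _ (rightDeriv_nonneg_of_convexOn_univ hφ h0))]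
    _ = ENNReal.ofReal (φ z) := by
        rw [integral_rightDeriv_of_convexOn_univ hφ haz.le, h0 a ha0.le, sub_zero]

-- Taylor's formula with integral remainder: `ρ` is the second derivative of `φ`, that is, the
-- Stieltjes measure of its right derivative.
lemma exists_lintegral_ofReal_sub_eq_of_convexOn (hφ : ConvexOn ℝ Set.univ φ)
    (h0 : ∀ t ≤ 0, φ t = 0) :
    ∃ ρ : Measure ℝ, SFinite ρ ∧
      ∀ z, ENNReal.ofReal (φ z) = ∫⁻ r, ENNReal.ofReal (z - r) ∂ρ := by
  set D : ℝ → ℝ := fun t => derivWithin φ (Set.Ioi t) t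
  have hD : Monotone D := monotone_rightDeriv_of_convexOn_univ hφ
  have hlim : Filter.Tendsto hD.stieltjesFunction Filter.atBot (nhds 0) := by
    refine tendsto_const_nhds.congr' ?_
    filter_upwards [Filter.eventually_lt_atBot (0 : ℝ)] with t ht
    rw [hD.stieltjesFunction_eq]
    refine (rightLim_eq_of_tendsto ?_).symm
    refine tendsto_const_nhds.congr' ?_
    filter_upwards [Ioo_mem_nhdsGT ht] with r hr
    exact (rightDeriv_eq_zero_of_neg h0 hr.2).symm
  have hIic : ∀ᵐ u : ℝ, hD.stieltjesFunction.measure (Set.Iic u) = ENNReal.ofReal (D u) := by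
    filter_upwards [hD.countable_not_continuousAt.ae_notMem volume] with u hu
    rw [StieltjesFunction.measure_Iic _ hlim, sub_zero, hD.stieltjesFunction_eq,
      (not_not.1 hu).continuousWithinAt.rightLim_eq]
  refine ⟨hD.stieltjesFunction.measure, inferInstance, fun z => ?_⟩
  rw [lintegral_ofReal_sub_eq_lintegral_measure (f := fun _ => z) (g := fun r => r) _
    measurable_const measurable_id,
    ← lintegral_Iio_rightDeriv_of_convexOn_univ hφ h0, ← lintegral_indicator measurableSet_Iio]
  refine lintegral_congr_ae ?_
  filter_upwards [hIic] with u hu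
  by_cases huz : u < z
  · simpa [huz, D, Set.Iic] using hu.symm
  · simp [huz]

lemma monotoneOn_Ici_of_convexOn (hφ : ConvexOn ℝ (Set.Ici 0) φ) (hpos : ∀ t ∈ Set.Ici 0, 0 ≤ φ t)
    (h0 : φ 0 = 0) : MonotoneOn φ (Set.Ici 0) := by
  intro s hs t ht hst
  obtain rfl | hs0 := (Set.mem_Ici.1 hs).eq_or_lt
  · exact h0.trans_le (hpos t ht)
  · refine hφ.le_right_of_left_le'' Set.self_mem_Ici ht hs0 hst ?_
    exact h0.trans_le (hpos s hs)

lemma convexOn_comp_of_nonneg {E : Type*} [AddCommMonoid E] [Module ℝ E] {S : Set E} {f : E → ℝ}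
    (hφ : ConvexOn ℝ (Set.Ici 0) φ) (hpos : ∀ t ∈ Set.Ici 0, 0 ≤ φ t) (h0 : φ 0 = 0)
    (hf : ConvexOn ℝ S f) (hf0 : ∀ x ∈ S, 0 ≤ f x) : ConvexOn ℝ S (φ ∘ f) := by
  refine ⟨hf.1, fun x hx y hy a b ha hb hab => ?_⟩
  have hle : 0 ≤ a • f x + b • f y := by have := hf0 x hx; have := hf0 y hy; positivity
  calc φ (f (a • x + b • y)) ≤ φ (a • f x + b • f y) :=
        monotoneOn_Ici_of_convexOn hφ hpos h0 (hf0 _ (hf.1 hx hy ha hb hab)) hle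
          (hf.2 hx hy ha hb hab)
    _ ≤ a • φ (f x) + b • φ (f y) := hφ.2 (hf0 x hx) (hf0 y hy) ha hb hab

lemma convexOn_comp_max_zero (hφ : ConvexOn ℝ Set.univ φ) (hpos : ∀ t, 0 ≤ φ t) (h0 : φ 0 = 0) :
    ConvexOn ℝ Set.univ fun z => φ (max z 0) :=
  convexOn_comp_of_nonneg (hφ.subset (Set.subset_univ _) (convex_Ici 0)) (fun t _ => hpos t) h0
    ((convexOn_id convex_univ).sup (convexOn_const 0 convex_univ)) fun _ _ => le_max_right _ _

variable {m n : Measure ℝ} [IsProbabilityMeasure m] [IsProbabilityMeasure n]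
  {γ : Measure (ℝ × ℝ)}

lemma lintegral_ofReal_sub_sub_quantileCoupling_le (hγ : IsCoupling γ m n) (r : ℝ) :
    ∫⁻ p, ENNReal.ofReal (p.1 - p.2 - r) ∂quantileCoupling m n
      ≤ ∫⁻ p, ENNReal.ofReal (p.1 - p.2 - r) ∂γ := by
  have := hγ.isProbabilityMeasure
  have := (isCoupling_quantileCoupling (m := m) (n := n)).isProbabilityMeasure
  have hset (u : ℝ) : {p : ℝ × ℝ | p.2 + r ≤ u ∧ u < p.1} = Set.Ioi u ×ˢ Set.Iic (u - r) := by
    ext p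
    simp [and_comm, le_sub_iff_add_le]
  have hlayer (P : Measure (ℝ × ℝ)) [SFinite P] : ∫⁻ p, ENNReal.ofReal (p.1 - p.2 - r) ∂P =
      ∫⁻ u, P (Set.Ioi u ×ˢ Set.Iic (u - r)) := by
    simp only [sub_sub, ← hset]
    exact lintegral_ofReal_sub_eq_lintegral_measure P measurable_fst (measurable_snd.add_const r)
  rw [hlayer, hlayer]
  exact lintegral_mono fun u => quantileCoupling_Ioi_prod_Iic_le hγ u (u - r)

lemma lintegral_quantileCoupling_le_of_eq_zero (hφ : ConvexOn ℝ Set.univ φ)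
    (h0 : ∀ t ≤ 0, φ t = 0) (hγ : IsCoupling γ m n) :
    ∫⁻ p, ENNReal.ofReal (φ (p.1 - p.2)) ∂quantileCoupling m n
      ≤ ∫⁻ p, ENNReal.ofReal (φ (p.1 - p.2)) ∂γ := by
  have := hγ.isProbabilityMeasure
  have := (isCoupling_quantileCoupling (m := m) (n := n)).isProbabilityMeasure
  obtain ⟨ρ, hρ, hφρ⟩ := exists_lintegral_ofReal_sub_eq_of_convexOn hφ h0
  simp only [hφρ]
  rw [lintegral_lintegral_swap (by fun_prop), lintegral_lintegral_swap (μ := γ) (by fun_prop)]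
  exact lintegral_mono fun r => lintegral_ofReal_sub_sub_quantileCoupling_le hγ r

lemma eq_max_add_max_neg (h0 : φ 0 = 0) (z : ℝ) :
    φ z = φ (max z 0) + φ (-max (-z) 0) := by
  rcases le_total 0 z with hz | hz <;> simp [hz, h0]

lemma lintegral_quantileCoupling_le (hφ : ConvexOn ℝ Set.univ φ) (hpos : ∀ t, 0 ≤ φ t)
    (h0 : φ 0 = 0) (hγ : IsCoupling γ m n) :
    ∫⁻ p, ENNReal.ofReal (φ (p.1 - p.2)) ∂quantileCoupling m n
      ≤ ∫⁻ p, ENNReal.ofReal (φ (p.1 - p.2)) ∂γ := by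
  have hcont := continuous_of_convexOn_univ hφ
  have hsplit (P : Measure (ℝ × ℝ)) : ∫⁻ p, ENNReal.ofReal (φ (p.1 - p.2)) ∂P =
      ∫⁻ p, ENNReal.ofReal (φ (max (p.1 - p.2) 0)) ∂P +
        ∫⁻ p, ENNReal.ofReal (φ (-max (p.1 - p.2) 0)) ∂P.map Prod.swap := by
    rw [lintegral_map (by fun_prop) measurable_swap, ← lintegral_add_left (by fun_prop)]
    refine lintegral_congr fun p => ?_
    rw [eq_max_add_max_neg h0, ENNReal.ofReal_add (hpos _) (hpos _), neg_sub]
    rfl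
  have hφneg : ConvexOn ℝ Set.univ fun z => φ (-z) := hφ.comp_linearMap (-LinearMap.id)
  rw [hsplit, hsplit, quantileCoupling_swap]
  refine add_le_add ?_ ?_
  · exact lintegral_quantileCoupling_le_of_eq_zero (convexOn_comp_max_zero hφ hpos h0)
      (fun t ht => by simp [ht, h0]) hγ
  · exact lintegral_quantileCoupling_le_of_eq_zero
      (convexOn_comp_max_zero hφneg (fun t => hpos (-t)) (by simp [h0]))
      (fun t ht => by simp [ht, h0]) hγ.swap

theorem isOptimalPlan_quantileCoupling (hφ : ConvexOn ℝ Set.univ φ) (hpos : ∀ t, 0 ≤ φ t)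
    (h0 : φ 0 = 0) :
    IsOptimalPlan (fun x y => ENNReal.ofReal (φ (x - y))) (quantileCoupling m n) m n :=
  isCoupling_quantileCoupling.isOptimalPlan fun _ => lintegral_quantileCoupling_le hφ hpos h0

theorem Wc_ofReal_sub_eq_lintegral_qf (hφ : ConvexOn ℝ Set.univ φ) (hpos : ∀ t, 0 ≤ φ t)
    (h0 : φ 0 = 0) :
    Wc (fun x y => ENNReal.ofReal (φ (x - y))) m n =
      ∫⁻ s in Set.Icc 0 1, ENNReal.ofReal (φ (qf m s - qf n s)) := by
  have hcont := continuous_of_convexOn_univ hφ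
  rw [← (isOptimalPlan_quantileCoupling hφ hpos h0).2]
  exact lintegral_quantileCoupling (f := fun p => ENNReal.ofReal (φ (p.1 - p.2))) (by fun_prop)

end ConvexCost

theorem stmt16_general (μ ν : Measure (ℝ × ℝ)) [IsProbabilityMeasure μ] [IsProbabilityMeasure ν]
    (φ₁ φ₂ : ℝ → ℝ) (hconv₁ : ConvexOn ℝ Set.univ φ₁) (hconv₂ : ConvexOn ℝ Set.univ φ₂)
    (hpos₁ : ∀ t, 0 ≤ φ₁ t) (hpos₂ : ∀ t, 0 ≤ φ₂ t) (h0₁ : φ₁ 0 = 0) (h0₂ : φ₂ 0 = 0)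
    (ζ : Measure (ℝ × ℝ))
    (hζ : IsPivot μ ν (fun a b => ENNReal.ofReal (φ₁ (a - b)))
      (fun a b => ENNReal.ofReal (φ₂ (a - b))) ζ)
    (κμ : Kernel ℝ ℝ) [IsMarkovKernel κμ] (hκμ : μ = (μ.snd ⊗ₘ κμ).map Prod.swap)
    (κζ₂ : Kernel ℝ ℝ) [IsMarkovKernel κζ₂] (hκζ₂ : ζ = (μ.snd ⊗ₘ κζ₂).map Prod.swap)
    (κζ₁ : Kernel ℝ ℝ) [IsMarkovKernel κζ₁] (hκζ₁ : ζ = ν.fst ⊗ₘ κζ₁)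
    (κν : Kernel ℝ ℝ) [IsMarkovKernel κν] (hκν : ν = ν.fst ⊗ₘ κν) :
    Wc (fun x y : ℝ × ℝ =>
        ENNReal.ofReal (φ₁ (x.1 - y.1)) + ENNReal.ofReal (φ₂ (x.2 - y.2))) μ ν
      = ∫⁻ x₂, (∫⁻ s in Set.Icc (0 : ℝ) 1,
            ENNReal.ofReal (φ₁ (qf (κμ x₂) s - qf (κζ₂ x₂) s))) ∂μ.snd
        + ∫⁻ y₁, (∫⁻ t in Set.Icc (0 : ℝ) 1,
            ENNReal.ofReal (φ₂ (qf (κζ₁ y₁) t - qf (κν y₁) t))) ∂ν.fst := by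
  have hcont₁ := continuous_of_convexOn_univ hconv₁
  have hcont₂ := continuous_of_convexOn_univ hconv₂
  have hη₁ (x₂ : ℝ) := quantileKernel_apply κμ κζ₂ x₂ ▸
    isOptimalPlan_quantileCoupling (m := κμ x₂) (n := κζ₂ x₂) hconv₁ hpos₁ h0₁
  have hη₂ (y₁ : ℝ) := quantileKernel_apply κζ₁ κν y₁ ▸
    isOptimalPlan_quantileCoupling (m := κζ₁ y₁) (n := κν y₁) hconv₂ hpos₂ h0₂
  rw [Wc_eq_lintegral_Wc_add_lintegral_Wc_of_isPivot (c₁ := fun a b => ENNReal.ofReal (φ₁ (a - b)))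
    (c₂ := fun a b => ENNReal.ofReal (φ₂ (a - b))) (by fun_prop) (by fun_prop)
    hζ hκμ hκζ₂ hκζ₁ hκν hη₁ hη₂]
  simp only [Wc_ofReal_sub_eq_lintegral_qf hconv₁ hpos₁ h0₁,
    Wc_ofReal_sub_eq_lintegral_qf hconv₂ hpos₂ h0₂]

theorem stmt16 (μ ν : Measure (ℝ × ℝ)) [IsProbabilityMeasure μ] [IsProbabilityMeasure ν]
    (h : ℝ → ℝ) (hconv : ConvexOn ℝ Set.univ h) (hpos : ∀ t, 0 ≤ h t) (h0 : h 0 = 0)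
    (ζ : Measure (ℝ × ℝ)) [IsProbabilityMeasure ζ]
    (hζ : IsPivot μ ν (fun a b => ENNReal.ofReal (h |a - b|))
      (fun a b => ENNReal.ofReal (h |a - b|)) ζ)
    -- conditional laws (disintegrations) of μ, ζ, ν:
    (κμ : Kernel ℝ ℝ) [IsMarkovKernel κμ]
    (hκμ : μ = ((μ.map Prod.snd) ⊗ₘ κμ).map Prod.swap)
    (κζ₂ : Kernel ℝ ℝ) [IsMarkovKernel κζ₂]
    (hκζ₂ : ζ = ((μ.map Prod.snd) ⊗ₘ κζ₂).map Prod.swap)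
    (κζ₁ : Kernel ℝ ℝ) [IsMarkovKernel κζ₁]
    (hκζ₁ : ζ = (ν.map Prod.fst) ⊗ₘ κζ₁)
    (κν : Kernel ℝ ℝ) [IsMarkovKernel κν]
    (hκν : ν = (ν.map Prod.fst) ⊗ₘ κν) :
    Wc (fun x y : ℝ × ℝ =>
        ENNReal.ofReal (h |x.1 - y.1|) + ENNReal.ofReal (h |x.2 - y.2|)) μ ν
      = ∫⁻ x₂, (∫⁻ s in Set.Icc (0 : ℝ) 1,
            ENNReal.ofReal (h |qf (κμ x₂) s - qf (κζ₂ x₂) s|)) ∂(μ.map Prod.snd)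
        + ∫⁻ y₁, (∫⁻ t in Set.Icc (0 : ℝ) 1,
            ENNReal.ofReal (h |qf (κζ₁ y₁) t - qf (κν y₁) t|)) ∂(ν.map Prod.fst) := by
  have habs : ConvexOn ℝ Set.univ fun t => h |t| := convexOn_comp_of_nonneg
    (hconv.subset (Set.subset_univ _) (convex_Ici 0)) (fun t _ => hpos t) h0
    (convexOn_norm convex_univ) fun t _ => abs_nonneg t
  exact stmt16_general μ ν _ _ habs habs (fun t => hpos |t|) (fun t => hpos |t|) (by simp [h0])
    (by simp [h0]) ζ hζ κμ hκμ κζ₂ hκζ₂ κζ₁ hκζ₁ κν hκν
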